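/- For every ε > 0 there exists a single neural network NN = (NN_a, NN_y) : ℝ^{n_x} → ℝ^{1+n_y} (a finite composition of affine maps and a fixed continuous non-polynomial activation applied componentwise) such that for all x ∈ K_x: (i) (NN_a(x), NN_y(x)) ∈ Γ(x), i.e. NN_a(x) ≥ a_low, NN_y(x) ∈ K_y, and I_s(x, NN_a(x), NN_y(x)) ≥ 0 for all s ∈ S; and (ii) f(x, NN_a(x), NN_y(x)) − V(x) ≤ ε. -/

import Mathlib

/-! For a fixed `x`, take a feasible point that is better than `ε`-optimal and raise `a` a little.
As the constraints have a uniform slope in `a`, the new point satisfies all of them with a common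
margin, so by equicontinuity of the constraints and lower semicontinuity of `V` it stays
`ε`-optimal for the nearby parameters; moving `y` into the interior of `Ky` makes the same point
interior to the graph of the map sending `x` to its `ε`-optimal points. The values of that map are
convex, so a partition of unity glues such local constants into a continuous selection which runs
inside the interior of the graph, and by compactness every function uniformly close enough to it
is still a selection.

One of these functions is a network with one hidden layer (Leshno, Lin, Pinkus and Schocken). Let
`W` be the closed span of the neurons `σ (ℓ + b)`, with `ℓ` a linear form. It contains
`ψ (c ℓ + b)` for every mollification `ψ` of `σ`, hence also the `k`-th derivative `ψ⁽ᵏ⁾(b) ℓ ^ k`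
in `c` at `c = 0`. If `ℓ ^ k ∉ W`, then `ψ⁽ᵏ⁾ = 0` for all mollifications, so `σ` is a pointwise
limit of polynomials of degree less than `k`, which is excluded. Thus `W` contains all powers
`ℓ ^ k`, then all exponentials `exp ℓ`, and it is everything by Stone–Weierstrass. -/

/-- Feedforward neural networks `ℝ^m → ℝ^n` with activation `σ`: finite alternating
compositions `A_l ∘ σ ∘ A_{l-1} ∘ ⋯ ∘ σ ∘ A_0` of affine maps and the componentwise
activation. -/
inductive IsNN (σ : ℝ → ℝ) : (m n : ℕ) → ((Fin m → ℝ) → (Fin n → ℝ)) → Prop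
  | affine {m n : ℕ} (A : Fin n → Fin m → ℝ) (b : Fin n → ℝ) :
      IsNN σ m n (fun (x : Fin m → ℝ) (i : Fin n) => (∑ j, A i j * x j) + b i)
  | comp {m k n : ℕ} (A : Fin n → Fin k → ℝ) (b : Fin n → ℝ)
      {F : (Fin m → ℝ) → (Fin k → ℝ)} (hF : IsNN σ m k F) :
      IsNN σ m n (fun (x : Fin m → ℝ) (i : Fin n) => (∑ j, A i j * σ (F x j)) + b i)

/-- Feasible set `Γ(x)` of the convex semi-infinite program. -/
def GammaFull {X Y S : Type*} (Ky : Set Y) (aLow : ℝ)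
    (I : S → X → ℝ → Y → ℝ) (x : X) : Set (ℝ × Y) :=
  {p | aLow ≤ p.1 ∧ p.2 ∈ Ky ∧ ∀ s, 0 ≤ I s x p.1 p.2}

/-- Value `V(x)` of the convex semi-infinite program. -/
noncomputable def VFull {X Y S : Type*} (Ky : Set Y) (aLow : ℝ)
    (f : X → ℝ → Y → ℝ) (I : S → X → ℝ → Y → ℝ) (x : X) : ℝ :=
  sInf ((fun p : ℝ × Y => f x p.1 p.2) '' GammaFull Ky aLow I x)

open Filter MeasureTheory Set
open scoped Convolution ContDiff Polynomial Topology

section Selection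

variable {X F : Type*} [TopologicalSpace X]

theorem convex_setOf_eventually_mem [AddCommGroup F] [Module ℝ F] [TopologicalSpace F]
    [IsTopologicalAddGroup F] {G : X → Set F} (hG : ∀ x, Convex ℝ (G x)) (x : X) :
    Convex ℝ {p | ∀ᶠ z in 𝓝 (x, p), z.2 ∈ G z.1} := by
  intro p hp q hq a b ha hb hab
  set c := a • p + b • q with hc
  have translate (r : F) : Tendsto (fun z : X × F => (z.1, z.2 + (r - c))) (𝓝 (x, c)) (𝓝 (x, r)) :=
    Continuous.tendsto' (by fun_prop) _ _ (by simp)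
  filter_upwards [(translate p).eventually hp, (translate q).eventually hq] with z hzp hzq
  have hz : a • (z.2 + (p - c)) + b • (z.2 + (q - c)) = z.2 := by
    calc a • (z.2 + (p - c)) + b • (z.2 + (q - c))
        = (a + b) • (z.2 - c) + (a • p + b • q) := by module
      _ = z.2 := by rw [hab, one_smul, ← hc, sub_add_cancel]
  exact hz ▸ hG z.1 hzp hzq ha hb hab

theorem exists_continuousMap_forall_eventually_mem [NormalSpace X] [ParacompactSpace X]
    [AddCommGroup F] [Module ℝ F] [TopologicalSpace F] [IsTopologicalAddGroup F]
    [ContinuousSMul ℝ F] {G : X → Set F} (hG : ∀ x, Convex ℝ (G x))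
    (hloc : ∀ x, ∃ p, ∀ᶠ z in 𝓝 (x, p), z.2 ∈ G z.1) :
    ∃ g : C(X, F), ∀ x, ∀ᶠ z in 𝓝 (x, g x), z.2 ∈ G z.1 := by
  refine exists_continuous_forall_mem_convex_of_local_const
    (convex_setOf_eventually_mem hG) fun x => ?_
  obtain ⟨p, hp⟩ := hloc x
  exact ⟨p, (Continuous.prodMk_left p).continuousAt.eventually hp.eventually_nhds⟩

theorem exists_ball_subset_of_forall_eventually_mem [CompactSpace X] [SeminormedAddCommGroup F]
    {G : X → Set F} {g : X → F} (hg : Continuous g)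
    (h : ∀ x, ∀ᶠ z in 𝓝 (x, g x), z.2 ∈ G z.1) :
    ∃ δ > 0, ∀ x, Metric.ball (g x) δ ⊆ G x := by
  have hnear : ∀ᶠ v in 𝓝 (0 : F), ∀ x ∈ (univ : Set X), g x + v ∈ G x := by
    refine isCompact_univ.eventually_forall_of_forall_eventually fun x _ => ?_
    have hcont : Tendsto (fun z : F × X => (z.2, g z.2 + z.1)) (𝓝 (0, x)) (𝓝 (x, g x)) :=
      Continuous.tendsto' (by fun_prop) _ _ (by simp)
    exact hcont.eventually (h x)
  obtain ⟨δ, hδ, hball⟩ := Metric.eventually_nhds_iff.1 hnear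
  refine ⟨δ, hδ, fun x p hp => ?_⟩
  have hv : dist (p - g x) 0 < δ := by rwa [dist_zero_right, ← dist_eq_norm]
  simpa using hball hv x (mem_univ x)

theorem exists_eventually_nhds_of_eventually_nhdsWithin [AddCommGroup F] [Module ℝ F]
    [TopologicalSpace F] [IsTopologicalAddGroup F] [ContinuousSMul ℝ F] {D : Set F}
    (hD : Convex ℝ D) (hint : (interior D).Nonempty) {P : X × F → Prop} {x : X} {p : F}
    (hp : p ∈ D) (hP : ∀ᶠ z in 𝓝[univ ×ˢ D] (x, p), P z) :
    ∃ q, ∀ᶠ z in 𝓝 (x, q), P z := by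
  have hcl : p ∈ closure (interior D) := by
    rw [hD.closure_interior_eq_closure_of_nonempty_interior hint]
    exact subset_closure hp
  have := mem_closure_iff_nhdsWithin_neBot.1 hcl
  have hmap : Tendsto (fun q : F => (x, q)) (𝓝[interior D] p) (𝓝[univ ×ˢ D] (x, p)) :=
    (Continuous.prodMk_right x).continuousWithinAt.tendsto_nhdsWithin
      fun q hq => ⟨mem_univ x, interior_subset hq⟩
  obtain ⟨q, hPq, hq⟩ :=
    ((hmap.eventually (eventually_eventually_nhdsWithin.2 hP)).and self_mem_nhdsWithin).exists
  refine ⟨q, ?_⟩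
  rwa [nhdsWithin_eq_nhds.2 (prod_mem_nhds univ_mem (mem_interior_iff_mem_nhds.1 hq))] at hPq

end Selection

/-- The feasible points of the program at `x` whose objective exceeds `V(x)` by at most `ε`. -/
def nearOptimalSet {X Y S : Type*} (Ky : Set Y) (aLow : ℝ) (f : X → ℝ → Y → ℝ)
    (I : S → X → ℝ → Y → ℝ) (ε : ℝ) (x : X) : Set (ℝ × Y) :=
  {p ∈ GammaFull Ky aLow I x | f x p.1 p.2 ≤ VFull Ky aLow f I x + ε}

section Program

variable {X Y S : Type*} {Ky : Set Y} {aLow : ℝ} {f : X → ℝ → Y → ℝ} {I : S → X → ℝ → Y → ℝ}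

theorem gammaFull_subset (x : X) : GammaFull Ky aLow I x ⊆ Ici aLow ×ˢ Ky :=
  fun _ hp => ⟨hp.1, hp.2.1⟩

theorem convex_gammaFull [AddCommGroup Y] [Module ℝ Y] {x : X} (hKy : Convex ℝ Ky)
    (hI : ∀ s, QuasiconcaveOn ℝ (Ici aLow ×ˢ Ky) fun p : ℝ × Y => I s x p.1 p.2) :
    Convex ℝ (GammaFull Ky aLow I x) := by
  have hΓ : GammaFull Ky aLow I x =
      (Ici aLow ×ˢ Ky) ∩ ⋂ s, {p ∈ Ici aLow ×ˢ Ky | 0 ≤ I s x p.1 p.2} := by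
    ext p
    simp only [GammaFull, mem_ofPred_eq, mem_inter_iff, mem_prod, mem_Ici, mem_iInter]
    grind
  rw [hΓ]
  exact ((convex_Ici aLow).prod hKy).inter (convex_iInter fun s => hI s 0)

theorem convex_nearOptimalSet [AddCommGroup Y] [Module ℝ Y] {x : X} (hKy : Convex ℝ Ky)
    (hf : QuasiconvexOn ℝ (Ici aLow ×ˢ Ky) fun p : ℝ × Y => f x p.1 p.2)
    (hI : ∀ s, QuasiconcaveOn ℝ (Ici aLow ×ˢ Ky) fun p : ℝ × Y => I s x p.1 p.2) (ε : ℝ) :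
    Convex ℝ (nearOptimalSet Ky aLow f I ε x) := by
  have hset : nearOptimalSet Ky aLow f I ε x = GammaFull Ky aLow I x ∩
      {p ∈ Ici aLow ×ˢ Ky | f x p.1 p.2 ≤ VFull Ky aLow f I x + ε} := by
    ext p
    exact ⟨fun hp => ⟨hp.1, gammaFull_subset x hp.1, hp.2⟩, fun hp => ⟨hp.1, hp.2.2⟩⟩
  rw [hset]
  exact (convex_gammaFull hKy hI).inter (hf _)

theorem exists_forall_mem_gammaFull {LaI M : ℝ} (hLaI : 0 < LaI)
    (hIslope : ∀ s x, ∀ y ∈ Ky, ∀ a1 a2 : ℝ, aLow ≤ a2 → a2 ≤ a1 →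
      LaI * (a1 - a2) ≤ I s x a1 y - I s x a2 y)
    (hM : ∀ s x, ∀ y ∈ Ky, M ≤ I s x aLow y) :
    ∃ b, ∀ x, ∀ y ∈ Ky, (b, y) ∈ GammaFull Ky aLow I x := by
  set B := max 0 (-M) / LaI
  have hB : 0 ≤ B := by positivity
  have hMB : -M ≤ LaI * B := (le_max_right 0 (-M)).trans_eq (mul_div_cancel₀ _ hLaI.ne').symm
  refine ⟨aLow + B, fun x y hy => ⟨le_add_of_nonneg_right hB, hy, fun s => ?_⟩⟩
  have hslope := hIslope s x y hy (aLow + B) aLow le_rfl (le_add_of_nonneg_right hB)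
  rw [add_sub_cancel_left] at hslope
  linarith [hM s x y hy]

variable [TopologicalSpace Y]

theorem vFull_le (hKy : IsCompact Ky) {x : X}
    (hf : ContinuousOn (fun y => f x aLow y) Ky)
    (hfmono : ∀ y ∈ Ky, MonotoneOn (fun a => f x a y) (Ici aLow))
    {p : ℝ × Y} (hp : p ∈ GammaFull Ky aLow I x) : VFull Ky aLow f I x ≤ f x p.1 p.2 := by
  obtain ⟨c, hc⟩ := hKy.bddBelow_image hf
  refine csInf_le ⟨c, ?_⟩ (mem_image_of_mem _ hp)
  rintro _ ⟨⟨a, y⟩, ⟨ha, hy, -⟩, rfl⟩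
  exact (hc (mem_image_of_mem _ hy)).trans (hfmono y hy self_mem_Ici ha ha)

variable [TopologicalSpace X]

theorem eventually_mem_gammaFull_imp_lt {x : X} {p : ℝ × Y} {w : ℝ} (hp : p ∈ Ici aLow ×ˢ Ky)
    (hf : ContinuousOn (fun q : X × ℝ × Y => f q.1 q.2.1 q.2.2) (univ ×ˢ Ici aLow ×ˢ Ky))
    (hI : ∀ s, ContinuousOn (fun q : X × ℝ × Y => I s q.1 q.2.1 q.2.2)
      (univ ×ˢ Ici aLow ×ˢ Ky))
    (hw : p ∈ GammaFull Ky aLow I x → w < f x p.1 p.2) :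
    ∀ᶠ z in 𝓝 (x, p), z.2 ∈ GammaFull Ky aLow I z.1 → w < f z.1 z.2.1 z.2.2 := by
  have hxp : (x, p) ∈ univ ×ˢ Ici aLow ×ˢ Ky := ⟨mem_univ x, hp⟩
  by_cases hfeas : p ∈ GammaFull Ky aLow I x
  · have hlt := (hf _ hxp).eventually (lt_mem_nhds (hw hfeas))
    filter_upwards [eventually_nhdsWithin_iff.1 hlt] with z hz hzΓ
    exact hz ⟨mem_univ z.1, gammaFull_subset z.1 hzΓ⟩
  · obtain ⟨s, hs⟩ : ∃ s, I s x p.1 p.2 < 0 := by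
      by_contra! hnonneg
      exact hfeas ⟨hp.1, hp.2, hnonneg⟩
    have hneg := (hI s _ hxp).eventually (gt_mem_nhds hs)
    filter_upwards [eventually_nhdsWithin_iff.1 hneg] with z hz hzΓ
    exact absurd (hz ⟨mem_univ z.1, gammaFull_subset z.1 hzΓ⟩) (hzΓ.2.2 s).not_gt

theorem lowerSemicontinuous_vFull {b : ℝ} (hKy : IsCompact Ky) (hKyne : Ky.Nonempty)
    (hf : ContinuousOn (fun q : X × ℝ × Y => f q.1 q.2.1 q.2.2) (univ ×ˢ Ici aLow ×ˢ Ky))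
    (hfmono : ∀ x, ∀ y ∈ Ky, MonotoneOn (fun a => f x a y) (Ici aLow))
    (hI : ∀ s, ContinuousOn (fun q : X × ℝ × Y => I s q.1 q.2.1 q.2.2)
      (univ ×ˢ Ici aLow ×ˢ Ky))
    (hb : ∀ x, ∀ y ∈ Ky, (b, y) ∈ GammaFull Ky aLow I x) :
    LowerSemicontinuous (VFull Ky aLow f I) := by
  intro x₀ v hv
  obtain ⟨w, hvw, hw⟩ := exists_between hv
  have hcont : ContinuousOn (fun y => f x₀ aLow y) Ky :=
    hf.comp (f := fun y => (x₀, aLow, y)) (by fun_prop)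
      fun y hy => ⟨mem_univ x₀, self_mem_Ici, hy⟩
  have hlocal : ∀ p ∈ Icc aLow b ×ˢ Ky, ∀ᶠ z in 𝓝 (x₀, p),
      z.2 ∈ GammaFull Ky aLow I z.1 → w < f z.1 z.2.1 z.2.2 := fun p hp =>
    eventually_mem_gammaFull_imp_lt ⟨hp.1.1, hp.2⟩ hf hI fun hpΓ =>
      hw.trans_le (vFull_le hKy hcont (hfmono x₀) hpΓ)
  filter_upwards [(isCompact_Icc.prod hKy).eventually_forall_of_forall_eventually
    (P := fun x p => p ∈ GammaFull Ky aLow I x → w < f x p.1 p.2) hlocal] with x hx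
  obtain ⟨y₀, hy₀⟩ := hKyne
  -- As `f` increases with `a`, truncating `a` at the uniformly feasible level `b` loses nothing,
  -- so it suffices to control `f` on the compact set `Icc aLow b ×ˢ Ky`.
  refine hvw.trans_le (le_csInf ⟨_, mem_image_of_mem _ (hb x y₀ hy₀)⟩ ?_)
  rintro _ ⟨⟨a, y⟩, hay, rfl⟩
  have hmin : (min a b, y) ∈ GammaFull Ky aLow I x := by
    rcases min_choice a b with h | h <;> rw [h]
    exacts [hay, hb x y hay.2.1]
  calc w ≤ f x (min a b) y := (hx _ ⟨⟨hmin.1, min_le_right a b⟩, hay.2.1⟩ hmin).le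
    _ ≤ f x a y := hfmono x y hay.2.1 hmin.1 hay.1 (min_le_left a b)

theorem eventually_lt_vFull_add {D : Set (ℝ × Y)} {x : X} {p : ℝ × Y} {ε : ℝ}
    (hf : ContinuousWithinAt (fun q : X × ℝ × Y => f q.1 q.2.1 q.2.2) (univ ×ˢ D) (x, p))
    (hV : LowerSemicontinuousAt (VFull Ky aLow f I) x)
    (hlt : f x p.1 p.2 < VFull Ky aLow f I x + ε) :
    ∀ᶠ z in 𝓝[univ ×ˢ D] (x, p), f z.1 z.2.1 z.2.2 < VFull Ky aLow f I z.1 + ε := by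
  obtain ⟨c, hfc, hcV⟩ := exists_between hlt
  have hVx : ∀ᶠ z in 𝓝 (x, p), c - ε < VFull Ky aLow f I z.1 :=
    (continuousAt_fst (p := (x, p))).eventually (hV (c - ε) (sub_lt_iff_lt_add.2 hcV))
  filter_upwards [hf.eventually (gt_mem_nhds hfc), nhdsWithin_le_nhds hVx] with z hz hVz
  linarith

theorem eventually_forall_nonneg {D : Set (ℝ × Y)} {x : X} {p : ℝ × Y} {c : ℝ} (hc : 0 < c)
    (hI : EquicontinuousWithinAt (fun s (q : X × ℝ × Y) => I s q.1 q.2.1 q.2.2)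
      (univ ×ˢ D) (x, p))
    (hle : ∀ s, c ≤ I s x p.1 p.2) :
    ∀ᶠ z in 𝓝[univ ×ˢ D] (x, p), ∀ s, 0 ≤ I s z.1 z.2.1 z.2.2 := by
  filter_upwards [hI _ (Metric.dist_mem_uniformity hc)] with z hz s
  have hdist : |I s x p.1 p.2 - I s z.1 z.2.1 z.2.2| < c := hz s
  linarith [hle s, (abs_lt.1 hdist).2]

theorem exists_eventually_nhdsWithin_mem_nearOptimalSet {LaI b ε : ℝ} (hε : 0 < ε)
    (hLaI : 0 < LaI) (hKyne : Ky.Nonempty) {x : X}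
    (hf : ContinuousOn (fun q : X × ℝ × Y => f q.1 q.2.1 q.2.2) (univ ×ˢ Ici aLow ×ˢ Ky))
    (hV : LowerSemicontinuousAt (VFull Ky aLow f I) x)
    (hI : EquicontinuousOn (fun s (q : X × ℝ × Y) => I s q.1 q.2.1 q.2.2)
      (univ ×ˢ Ici aLow ×ˢ Ky))
    (hIslope : ∀ s x, ∀ y ∈ Ky, ∀ a1 a2 : ℝ, aLow ≤ a2 → a2 ≤ a1 →
      LaI * (a1 - a2) ≤ I s x a1 y - I s x a2 y)
    (hb : ∀ x, ∀ y ∈ Ky, (b, y) ∈ GammaFull Ky aLow I x) :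
    ∃ p ∈ Ici aLow ×ˢ Ky, ∀ᶠ z in 𝓝[univ ×ˢ Ici aLow ×ˢ Ky] (x, p),
      z.2 ∈ nearOptimalSet Ky aLow f I ε z.1 := by
  obtain ⟨y₀, hy₀⟩ := hKyne
  obtain ⟨_, ⟨⟨a, y⟩, ⟨ha, hy, hfeas⟩, rfl⟩, hopt⟩ := exists_lt_of_csInf_lt
    ⟨_, mem_image_of_mem _ (hb x y₀ hy₀)⟩ (lt_add_of_pos_right (VFull Ky aLow f I x) hε)
  have hopt' := eventually_eventually_nhdsWithin.2
    (eventually_lt_vFull_add (hf (x, a, y) ⟨mem_univ x, ha, hy⟩) hV hopt)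
  have hlift : Tendsto (fun a' => (x, a', y)) (𝓝[>] a) (𝓝[univ ×ˢ Ici aLow ×ˢ Ky] (x, a, y)) :=
    ContinuousWithinAt.tendsto_nhdsWithin (by fun_prop)
      fun a' ha' => ⟨mem_univ x, ha.trans ha'.le, hy⟩
  obtain ⟨a', hnear, ha'⟩ := ((hlift.eventually hopt').and self_mem_nhdsWithin).exists
  have hp : (a', y) ∈ Ici aLow ×ˢ Ky := ⟨ha.trans ha'.le, hy⟩
  have hslater : ∀ s, LaI * (a' - a) ≤ I s x a' y := fun s => by
    linarith [hIslope s x y hy a' a ha ha'.le, hfeas s]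
  refine ⟨(a', y), hp, ?_⟩
  filter_upwards [hnear, self_mem_nhdsWithin, eventually_forall_nonneg
    (mul_pos hLaI (sub_pos.2 ha')) (hI (x, a', y) ⟨mem_univ x, hp⟩) hslater] with z hz hzD hzI
  exact ⟨⟨hzD.2.1, hzD.2.2, hzI⟩, hz.le⟩

theorem exists_continuousMap_ball_subset_nearOptimalSet [CompactSpace X] [T2Space X]
    {E : Type*} [SeminormedAddCommGroup E] [NormedSpace ℝ E] {Ky : Set E}
    {f : X → ℝ → E → ℝ} {I : S → X → ℝ → E → ℝ}
    {LaI M ε : ℝ} (hε : 0 < ε) (hKycomp : IsCompact Ky) (hKyconv : Convex ℝ Ky)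
    (hKyint : (interior Ky).Nonempty)
    (hf : ContinuousOn (fun q : X × ℝ × E => f q.1 q.2.1 q.2.2) (univ ×ˢ Ici aLow ×ˢ Ky))
    (hfconv : ∀ x, QuasiconvexOn ℝ (Ici aLow ×ˢ Ky) fun p : ℝ × E => f x p.1 p.2)
    (hfmono : ∀ x, ∀ y ∈ Ky, MonotoneOn (fun a => f x a y) (Ici aLow))
    (hI : EquicontinuousOn (fun s (q : X × ℝ × E) => I s q.1 q.2.1 q.2.2)
      (univ ×ˢ Ici aLow ×ˢ Ky))
    (hIconc : ∀ s x, QuasiconcaveOn ℝ (Ici aLow ×ˢ Ky) fun p : ℝ × E => I s x p.1 p.2)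
    (hLaI : 0 < LaI)
    (hIslope : ∀ s x, ∀ y ∈ Ky, ∀ a1 a2 : ℝ, aLow ≤ a2 → a2 ≤ a1 →
      LaI * (a1 - a2) ≤ I s x a1 y - I s x a2 y)
    (hM : ∀ s x, ∀ y ∈ Ky, M ≤ I s x aLow y) :
    ∃ g : C(X, ℝ × E), ∃ δ > 0, ∀ x,
      Metric.ball (g x) δ ⊆ nearOptimalSet Ky aLow f I ε x := by
  obtain ⟨b, hb⟩ := exists_forall_mem_gammaFull hLaI hIslope hM
  have hKyne : Ky.Nonempty := hKyint.mono interior_subset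
  have hV := lowerSemicontinuous_vFull hKycomp hKyne hf hfmono (fun s => hI.continuousOn s) hb
  have hDint : (interior (Ici aLow ×ˢ Ky)).Nonempty := by
    rw [interior_prod_eq, interior_Ici]
    exact nonempty_Ioi.prod hKyint
  have hloc (x : X) : ∃ p, ∀ᶠ z in 𝓝 (x, p), z.2 ∈ nearOptimalSet Ky aLow f I ε z.1 := by
    obtain ⟨p, hp, hnear⟩ :=
      exists_eventually_nhdsWithin_mem_nearOptimalSet hε hLaI hKyne hf (hV x) hI hIslope hb
    exact exists_eventually_nhds_of_eventually_nhdsWithin ((convex_Ici aLow).prod hKyconv)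
      hDint hp hnear
  obtain ⟨g, hg⟩ := exists_continuousMap_forall_eventually_mem
    (fun x => convex_nearOptimalSet hKyconv (hfconv x) (hIconc · x) ε) hloc
  exact ⟨g, exists_ball_subset_of_forall_eventually_mem g.continuous hg⟩

end Program

section PolynomialFunctions

theorem eq_taylorWithinEval_of_iteratedDeriv_eq_zero {E : Type*} [NormedAddCommGroup E]
    [NormedSpace ℝ E] {n : ℕ} {f : ℝ → E} (hf : ContDiff ℝ (n + 1) f)
    (h : ∀ t, iteratedDeriv (n + 1) f t = 0) (x₀ x : ℝ) :
    f x = taylorWithinEval f n univ x₀ x := by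
  induction n generalizing f x with
  | zero =>
    rw [taylor_within_zero_eval]
    refine is_const_of_deriv_eq_zero (hf.differentiable (by simp)) (fun t => ?_) x x₀
    simpa only [zero_add, iteratedDeriv_one] using h t
  | succ n ih =>
    have hf' : ContDiff ℝ (n + 1) (deriv f) := by
      exact_mod_cast (contDiff_succ_iff_deriv.1 (by exact_mod_cast hf)).2.2
    have hderiv (t : ℝ) :
        HasDerivAt (fun t => f t - taylorWithinEval f (n + 1) univ x₀ t) 0 t := by
      have htaylor := hasDerivAt_taylorWithinEval_succ (x₀ := x₀) (x := t) (s := univ) f n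
      rw [derivWithin_univ,
        ← ih hf' (fun t => by rw [← iteratedDeriv_succ']; exact h t) t] at htaylor
      exact ((hf.differentiable (by simp) t).hasDerivAt.fun_sub htaylor).congr_deriv (sub_self _)
    have hconst := is_const_of_deriv_eq_zero (fun t => (hderiv t).differentiableAt)
      (fun t => (hderiv t).deriv) x x₀
    rwa [taylorWithinEval_self, sub_self, sub_eq_zero] at hconst

theorem exists_mem_degreeLT_of_iteratedDeriv_eq_zero {n : ℕ} {f : ℝ → ℝ}
    (hf : ContDiff ℝ (n + 1) f) (h : ∀ t, iteratedDeriv (n + 1) f t = 0) :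
    ∃ p ∈ Polynomial.degreeLT ℝ (n + 1), ∀ t, f t = p.eval t := by
  refine ⟨∑ k ∈ Finset.range (n + 1),
    Polynomial.monomial k ((k.factorial : ℝ)⁻¹ * iteratedDeriv k f 0), ?_, fun t => ?_⟩
  · refine Submodule.sum_mem _ fun k hk => Polynomial.mem_degreeLT.2 ?_
    exact (Polynomial.degree_monomial_le k _).trans_lt (by exact_mod_cast Finset.mem_range.1 hk)
  · rw [eq_taylorWithinEval_of_iteratedDeriv_eq_zero hf h 0 t, taylor_within_apply,
      Polynomial.eval_finsetSum]
    refine Finset.sum_congr rfl fun k _ => ?_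
    rw [Polynomial.eval_monomial, iteratedDerivWithin_univ, sub_zero, smul_eq_mul,
      mul_right_comm]

theorem exists_polynomial_of_tendsto_eval {ι : Type*} {l : Filter ι} [l.NeBot] {n : ℕ}
    {p : ι → ℝ[X]} (hp : ∀ i, p i ∈ Polynomial.degreeLT ℝ n) {f : ℝ → ℝ}
    (hlim : ∀ t, Tendsto (fun i => (p i).eval t) l (𝓝 (f t))) :
    ∃ q : ℝ[X], ∀ t, f t = q.eval t := by
  let W : Submodule ℝ (ℝ → ℝ) :=
    (Polynomial.degreeLT ℝ n).map (LinearMap.pi fun t => Polynomial.leval t)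
  have : Module.Finite ℝ (Polynomial.degreeLT ℝ n) :=
    Module.Finite.equiv (Polynomial.degreeLTEquiv ℝ n).symm
  have hf : f ∈ W := W.closed_of_finiteDimensional.mem_of_tendsto (tendsto_pi_nhds.2 hlim)
    (Eventually.of_forall fun i => Submodule.mem_map_of_mem (hp i))
  obtain ⟨q, -, hq⟩ := hf
  exact ⟨q, fun t => (congrFun hq t).symm⟩

end PolynomialFunctions

section ClosedSubmodule

variable {E : Type*} [NormedAddCommGroup E] [NormedSpace ℝ E] {V : Submodule ℝ E}

theorem iteratedDeriv_mem_of_isClosed (hV : IsClosed (V : Set E)) {f : ℝ → E} (hf : ∀ t, f t ∈ V)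
    (k : ℕ) (t : ℝ) : iteratedDeriv k f t ∈ V := by
  induction k generalizing t with
  | zero => simpa using hf t
  | succ k ih =>
    have hsub : closure (Submodule.span ℝ (iteratedDeriv k f '' univ) : Set E) ⊆ V :=
      closure_minimal (Submodule.span_le.2 (image_subset_iff.2 fun s _ => ih s)) hV
    rw [iteratedDeriv_succ]
    exact hsub (range_deriv_subset_closure_span_image _ dense_univ (mem_range_self t))

theorem integral_mem_of_isClosed {α : Type*} [MeasurableSpace α] {μ : Measure α} [CompleteSpace E]
    (hV : IsClosed (V : Set E)) {g : α → E} (hg : Integrable g μ) (h : ∀ a, g a ∈ V) :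
    ∫ a, g a ∂μ ∈ V := by
  have : IsClosed (V : Set E) := hV
  have hquot (a : α) : V.mkQL (g a) = 0 := (Submodule.Quotient.mk_eq_zero V).2 (h a)
  rw [← Submodule.Quotient.mk_eq_zero]
  calc V.mkQL (∫ a, g a ∂μ) = ∫ a, V.mkQL (g a) ∂μ := (V.mkQL.integral_comp_comm hg).symm
    _ = 0 := by simp only [hquot, integral_zero]

theorem exp_mem_of_forall_pow_mem {A : Type*} [NormedRing A] [NormedAlgebra ℝ A] [CompleteSpace A]
    {V : Submodule ℝ A} (hV : IsClosed (V : Set A)) {a : A} (h : ∀ k, a ^ k ∈ V) :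
    NormedSpace.exp a ∈ V :=
  hV.mem_of_tendsto (NormedSpace.exp_series_hasSum_exp' (𝕂 := ℝ) a) <|
    Eventually.of_forall fun _ => V.sum_mem fun k _ => V.smul_mem _ (h k)

end ClosedSubmodule

section RidgeFunctions

variable {X : Type*} [TopologicalSpace X] [CompactSpace X]

theorem hasDerivAt_comp_smul_add {φ φ' : C(ℝ, ℝ)} (hφ : ∀ t, HasDerivAt φ (φ' t) t)
    (L B : C(X, ℝ)) (c : ℝ) :
    HasDerivAt (fun c : ℝ => φ.comp (c • L + B)) (L * φ'.comp (c • L + B)) c := by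
  set g : ℝ → C(X, ℝ) := fun c => L * φ'.comp (c • L + B)
  have hgc : Continuous g :=
    continuous_const.mul ((ContinuousMap.continuous_postcomp φ').comp (by fun_prop))
  have hderiv (x : X) (s : ℝ) : HasDerivAt (fun s => φ (s * L x + B x)) (g s x) s := by
    have hline : HasDerivAt (fun s : ℝ => s * L x + B x) (L x) s :=
      (hasDerivAt_mul_const (L x)).add_const (B x)
    exact ((hφ (s * L x + B x)).comp s hline).congr_deriv (mul_comm _ _)
  have hint (c : ℝ) : φ.comp (c • L + B) = φ.comp B + ∫ s in (0 : ℝ)..c, g s := by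
    ext x
    have hcont : Continuous fun s => g s x := (continuous_eval_const x).comp hgc
    have heval : (∫ s in (0 : ℝ)..c, g s) x = ∫ s in (0 : ℝ)..c, g s x :=
      ((ContinuousMap.evalCLM ℝ x).intervalIntegral_comp_comm (hgc.intervalIntegrable _ _)).symm
    rw [ContinuousMap.add_apply, heval, intervalIntegral.integral_eq_sub_of_hasDerivAt
      (fun s _ => hderiv x s) (hcont.intervalIntegrable _ _)]
    simp
  simp only [hint]
  exact (hgc.integral_hasStrictDerivAt 0 c).hasDerivAt.const_add _

theorem iteratedDeriv_comp_smul_add {ψ : C(ℝ, ℝ)} (hψ : ContDiff ℝ ∞ ψ) (L B : C(X, ℝ)) (k : ℕ) :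
    iteratedDeriv k (fun c : ℝ => ψ.comp (c • L + B)) = fun c =>
      L ^ k * (⟨iteratedDeriv k ψ, hψ.continuous_iteratedDeriv k (mod_cast le_top)⟩ :
        C(ℝ, ℝ)).comp (c • L + B) := by
  induction k with
  | zero => ext c x; simp
  | succ k ih =>
    have hk (t : ℝ) : HasDerivAt (iteratedDeriv k ψ) (iteratedDeriv (k + 1) ψ t) t := by
      rw [iteratedDeriv_succ]
      exact (hψ.differentiable_iteratedDeriv k (mod_cast WithTop.coe_lt_top _) t).hasDerivAt
    funext c
    rw [iteratedDeriv_succ, ih, pow_succ, mul_assoc]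
    exact ((hasDerivAt_comp_smul_add (φ' := ⟨iteratedDeriv (k + 1) ψ, _⟩) hk L B c).const_mul
      (L ^ k)).deriv

variable {V : Submodule ℝ C(X, ℝ)}

theorem pow_mem_of_iteratedDeriv_ne_zero (hV : IsClosed (V : Set C(X, ℝ))) {L : C(X, ℝ)}
    {ψ : C(ℝ, ℝ)} (hψ : ContDiff ℝ ∞ ψ)
    (h : ∀ c b : ℝ, ψ.comp (c • L + ContinuousMap.const X b) ∈ V)
    {k : ℕ} {t : ℝ} (ht : iteratedDeriv k ψ t ≠ 0) : L ^ k ∈ V := by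
  have hmem := iteratedDeriv_mem_of_isClosed hV (h · t) k 0
  rw [iteratedDeriv_comp_smul_add hψ] at hmem
  have hscaled : iteratedDeriv k ψ t • L ^ k ∈ V := by
    convert hmem using 1
    ext x
    simp [mul_comm]
  exact (V.smul_mem_iff ht).1 hscaled

theorem comp_mem_of_eq_convolution (hV : IsClosed (V : Set C(X, ℝ))) {L : C(X, ℝ)}
    {φ : ℝ → ℝ} (hφ : Continuous φ) (hφsupp : HasCompactSupport φ) {σ ψ : C(ℝ, ℝ)}
    (hψ : ψ = φ ⋆[ContinuousLinearMap.lsmul ℝ ℝ, volume] σ)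
    (h : ∀ b : ℝ, σ.comp (L + ContinuousMap.const X b) ∈ V) : ψ.comp L ∈ V := by
  set g : ℝ → C(X, ℝ) := fun s => φ s • σ.comp (L + ContinuousMap.const X (-s)) with hg
  have hgc : Continuous g := hφ.smul <| (ContinuousMap.continuous_postcomp σ).comp <|
    continuous_const.add (ContinuousMap.continuous_const'.comp continuous_neg)
  have hgi : Integrable g := hgc.integrable_of_hasCompactSupport hφsupp.smul_right
  have hint : ψ.comp L = ∫ s, g s := by
    ext x
    rw [ContinuousMap.integral_apply hgi, ContinuousMap.comp_apply, hψ]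
    simp [convolution, hg, sub_eq_add_neg]
  rw [hint]
  exact integral_mem_of_isClosed hV hgi fun s => V.smul_mem _ (h _)

theorem pow_mem_of_not_polynomial (hV : IsClosed (V : Set C(X, ℝ))) {L : C(X, ℝ)} {σ : C(ℝ, ℝ)}
    (hσ : ¬ ∃ p : ℝ[X], ∀ t, σ t = p.eval t)
    (h : ∀ c b : ℝ, σ.comp (c • L + ContinuousMap.const X b) ∈ V) (k : ℕ) : L ^ k ∈ V := by
  by_contra hk
  let φ : ℕ → ContDiffBump (0 : ℝ) := fun n =>
    ⟨1 / (n + 1) / 2, 1 / (n + 1), by positivity, half_lt_self (by positivity)⟩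
  let ψ : ℕ → ℝ → ℝ := fun n =>
    (φ n).normed volume ⋆[ContinuousLinearMap.lsmul ℝ ℝ, volume] σ
  have hψ (n : ℕ) : ContDiff ℝ ∞ (ψ n) :=
    (φ n).hasCompactSupport_normed.contDiff_convolution_left _ (φ n).contDiff_normed
      σ.continuous.locallyIntegrable
  have hψV (n : ℕ) (c b : ℝ) :
      (⟨ψ n, (hψ n).continuous⟩ : C(ℝ, ℝ)).comp (c • L + ContinuousMap.const X b) ∈ V := by
    refine comp_mem_of_eq_convolution hV (φ n).continuous_normed (φ n).hasCompactSupport_normed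
      rfl fun b' => ?_
    convert h c (b + b') using 2
    ext x
    simp [add_assoc]
  have hzero (n : ℕ) (t : ℝ) : iteratedDeriv (k + 1) (ψ n) t = 0 := by
    have hvanish : iteratedDeriv k (ψ n) = 0 := by
      ext t
      by_contra ht
      exact hk (pow_mem_of_iteratedDeriv_ne_zero hV (ψ := ⟨ψ n, _⟩) (hψ n) (hψV n) ht)
    rw [iteratedDeriv_succ, hvanish, deriv_zero, Pi.zero_apply]
  choose p hp hpψ using fun n => exists_mem_degreeLT_of_iteratedDeriv_eq_zero
    ((hψ n).of_le (mod_cast le_top)) (hzero n)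
  refine hσ (exists_polynomial_of_tendsto_eval hp (l := atTop) fun t => ?_)
  simp only [← hpψ]
  exact ContDiffBump.convolution_tendsto_right_of_continuous
    tendsto_one_div_add_atTop_nhds_zero_nat σ.continuous t

theorem eq_top_of_forall_exp_mem (hV : IsClosed (V : Set C(X, ℝ)))
    {W : Type*} [AddMonoid W] (l : W →+ C(X, ℝ))
    (hl : ∀ x y, x ≠ y → ∃ w, l w x ≠ l w y) (h : ∀ w, NormedSpace.exp (l w) ∈ V) : V = ⊤ := by
  let S : Submonoid C(X, ℝ) :=
    { carrier := range fun w => NormedSpace.exp (l w)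
      one_mem' := ⟨0, by simp only [map_zero, NormedSpace.exp_zero]⟩
      mul_mem' := by
        rintro _ _ ⟨w, rfl⟩ ⟨w', rfl⟩
        exact ⟨w + w', by simp only [map_add, NormedSpace.exp_add]⟩ }
  let A := Algebra.adjoin ℝ (S : Set C(X, ℝ))
  have hsep : A.SeparatesPoints := fun x y hxy => by
    obtain ⟨w, hw⟩ := hl x y hxy
    have hexp (z : X) : NormedSpace.exp (l w) z = Real.exp (l w z) := by
      rw [NormedSpace.exp_continuousMap_eq, Real.exp_eq_exp_ℝ]
      rfl
    refine ⟨_, ⟨NormedSpace.exp (l w), Algebra.subset_adjoin ⟨w, rfl⟩, rfl⟩, ?_⟩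
    simpa only [hexp, ne_eq, Real.exp_eq_exp] using hw
  have hAV : (A : Set C(X, ℝ)) ⊆ V := by
    change (Subalgebra.toSubmodule A : Set C(X, ℝ)) ⊆ V
    rw [Algebra.adjoin_eq_span, Submonoid.closure_eq]
    exact Submodule.span_le.2 (range_subset_iff.2 h)
  have hA := ContinuousMap.subalgebra_topologicalClosure_eq_top_of_separatesPoints A hsep
  refine eq_top_iff.2 fun g _ => closure_minimal hAV hV ?_
  change g ∈ A.topologicalClosure
  rw [hA]
  exact Algebra.mem_top

theorem eq_top_of_forall_comp_mem (hV : IsClosed (V : Set C(X, ℝ))) {W : Type*} [AddCommGroup W]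
    [Module ℝ W] (l : W →ₗ[ℝ] C(X, ℝ)) (hl : ∀ x y, x ≠ y → ∃ w, l w x ≠ l w y) {σ : C(ℝ, ℝ)}
    (hσ : ¬ ∃ p : ℝ[X], ∀ t, σ t = p.eval t)
    (h : ∀ w (b : ℝ), σ.comp (l w + ContinuousMap.const X b) ∈ V) : V = ⊤ :=
  eq_top_of_forall_exp_mem hV l.toAddMonoidHom hl fun w =>
    exp_mem_of_forall_pow_mem hV <| pow_mem_of_not_polynomial hV hσ fun c b => by
      simpa only [LinearMap.toAddMonoidHom_coe, map_smul] using h (c • w) b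

end RidgeFunctions

section Networks

variable {σ : ℝ → ℝ} {m n : ℕ}

theorem IsNN.shallow {ι : Type*} [Fintype ι] (A : Fin n → ι → ℝ) (w : ι → Fin m → ℝ)
    (b : ι → ℝ) :
    IsNN σ m n fun x i => ∑ k, A i k * σ ((∑ j, w k j * x j) + b k) := by
  let e := Fintype.equivFin ι
  convert IsNN.comp (σ := σ) (fun i k => A i (e.symm k)) (fun _ => 0)
    (IsNN.affine (fun k => w (e.symm k)) (fun k => b (e.symm k))) using 3 with x i
  rw [add_zero]
  exact (Equiv.sum_comp e.symm fun k => A i k * σ ((∑ j, w k j * x j) + b k)).symm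

/-- The linear form `x ↦ ∑ j, w j * x j` on `K`, as a linear function of its weight vector `w`. -/
def linearFormOn (K : Set (Fin m → ℝ)) : (Fin m → ℝ) →ₗ[ℝ] C(K, ℝ) where
  toFun w := ⟨fun x => ∑ j, w j * x.1 j, continuous_finsetSum _ fun j _ =>
    continuous_const.mul ((continuous_apply j).comp continuous_subtype_val)⟩
  map_add' w w' := by
    ext x
    simp [add_mul, Finset.sum_add_distrib]
  map_smul' c w := by
    ext x
    simp [Finset.mul_sum, mul_assoc]

theorem exists_linearFormOn_ne {K : Set (Fin m → ℝ)} {x y : K} (hxy : x ≠ y) :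
    ∃ w, linearFormOn K w x ≠ linearFormOn K w y := by
  obtain ⟨i, hi⟩ := Function.ne_iff.1 (Subtype.coe_ne_coe.2 hxy)
  exact ⟨Pi.single i 1, by simpa [linearFormOn, Pi.single_apply] using hi⟩

theorem topologicalClosure_span_neurons_eq_top {K : Set (Fin m → ℝ)} [CompactSpace K] {σ : C(ℝ, ℝ)}
    (hσ : ¬ ∃ p : ℝ[X], ∀ t, σ t = p.eval t) :
    (Submodule.span ℝ (range fun p : (Fin m → ℝ) × ℝ =>
      σ.comp (linearFormOn K p.1 + ContinuousMap.const K p.2))).topologicalClosure = ⊤ :=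
  eq_top_of_forall_comp_mem (Submodule.isClosed_topologicalClosure _) (linearFormOn K)
    (fun _ _ => exists_linearFormOn_ne) hσ fun w b =>
      Submodule.le_topologicalClosure _ (Submodule.subset_span ⟨(w, b), rfl⟩)

theorem exists_finsupp_abs_sub_lt (hσcont : Continuous σ)
    (hσ : ¬ ∃ p : ℝ[X], ∀ t, σ t = p.eval t) {K : Set (Fin m → ℝ)} [CompactSpace K]
    (g : C(K, ℝ)) {ε : ℝ} (hε : 0 < ε) :
    ∃ c : ((Fin m → ℝ) × ℝ) →₀ ℝ, ∀ x : K,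
      |(c.sum fun p a => a * σ ((∑ j, p.1 j * x.1 j) + p.2)) - g x| < ε := by
  have hg := Submodule.mem_top (R := ℝ) (x := g)
  rw [← topologicalClosure_span_neurons_eq_top (σ := ⟨σ, hσcont⟩) hσ] at hg
  obtain ⟨u, hu, hgu⟩ := Metric.mem_closure_iff.1 hg ε hε
  obtain ⟨c, rfl⟩ := Finsupp.mem_span_range_iff_exists_finsupp.1 hu
  refine ⟨c, fun x => ?_⟩
  have hx := (ContinuousMap.dist_lt_iff hε).1 hgu x
  rw [dist_comm, Real.dist_eq] at hx
  simpa [Finsupp.sum, ContinuousMap.sum_apply, linearFormOn] using hx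

theorem exists_isNN_dist_lt (hσcont : Continuous σ) (hσ : ¬ ∃ p : ℝ[X], ∀ t, σ t = p.eval t)
    {K : Set (Fin m → ℝ)} [CompactSpace K] (g : C(K, Fin n → ℝ)) {ε : ℝ} (hε : 0 < ε) :
    ∃ F, IsNN σ m n F ∧ ∀ x : K, dist (F x) (g x) < ε := by
  classical
  choose c hc using fun i =>
    exists_finsupp_abs_sub_lt hσcont hσ ((ContinuousMap.eval i).comp g) hε
  let P : Finset ((Fin m → ℝ) × ℝ) := Finset.univ.biUnion fun i => (c i).support
  refine ⟨_, IsNN.shallow (ι := P) (fun i p => c i p) (fun p => p.1.1) (fun p => p.1.2),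
    fun x => (dist_pi_lt_iff hε).2 fun i => ?_⟩
  have hsum : ∑ p : P, c i p * σ ((∑ j, p.1.1 j * x.1 j) + p.1.2) =
      (c i).sum fun p a => a * σ ((∑ j, p.1 j * x.1 j) + p.2) := by
    rw [Finsupp.sum_of_support_subset (c i)
      (Finset.subset_biUnion_of_mem (fun i => (c i).support) (Finset.mem_univ i)) _ (by simp)]
    exact Finset.sum_coe_sort P fun p => c i p * σ ((∑ j, p.1 j * x.1 j) + p.2)
  rw [Real.dist_eq, hsum]
  exact hc i x

theorem exists_isNN_prodMk_dist_lt (hσcont : Continuous σ)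
    (hσ : ¬ ∃ p : ℝ[X], ∀ t, σ t = p.eval t) {K : Set (Fin m → ℝ)} [CompactSpace K]
    (g : C(K, ℝ × (Fin n → ℝ))) {ε : ℝ} (hε : 0 < ε) :
    ∃ F, IsNN σ m (n + 1) F ∧ ∀ x : K, dist (F x 0, fun i : Fin n => F x i.succ) (g x) < ε := by
  let gcons : C(K, Fin (n + 1) → ℝ) :=
    ⟨fun x => Fin.cons (g x).1 (g x).2, by fun_prop⟩
  obtain ⟨F, hF, hFg⟩ := exists_isNN_dist_lt hσcont hσ gcons hε
  refine ⟨F, hF, fun x => ?_⟩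
  have hcoord := (dist_pi_lt_iff hε).1 (hFg x)
  exact max_lt (hcoord 0) ((dist_pi_lt_iff hε).2 fun i => hcoord i.succ)

end Networks

section General

theorem equicontinuousOn_comp_of_mapsTo {ι Z X α : Type*} [TopologicalSpace Z] [TopologicalSpace X]
    [UniformSpace α] {F : ι → X → α} {A : Set X} (hF : EquicontinuousOn F A) {h : Z → X}
    {B : Set Z} (hh : ContinuousOn h B) (hmaps : MapsTo h B A) :
    EquicontinuousOn (fun i z => F i (h z)) B := fun z hz U hU =>
  ((hh z hz).tendsto_nhdsWithin hmaps).eventually (hF (h z) (hmaps hz) U hU)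

theorem nonempty_interior_of_forall_norm_sub_le {E : Type*} [SeminormedAddCommGroup E] {s : Set E}
    {y : E} {δ : ℝ} (hδ : 0 < δ) (h : ∀ z, ‖y - z‖ ≤ δ → z ∈ s) : (interior s).Nonempty := by
  refine ⟨y, mem_interior_iff_mem_nhds.2 ?_⟩
  filter_upwards [Metric.closedBall_mem_nhds y hδ] with z hz
  exact h z (by rwa [← dist_eq_norm, dist_comm])

theorem monotoneOn_Ici_of_mul_sub_le {g : ℝ → ℝ} {aLow c : ℝ} (hc : 0 ≤ c)
    (h : ∀ a1 a2, aLow ≤ a2 → a2 ≤ a1 → c * (a1 - a2) ≤ g a1 - g a2) :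
    MonotoneOn g (Ici aLow) := fun a2 ha2 a1 _ hle =>
  sub_nonneg.1 <| (mul_nonneg hc (sub_nonneg.2 hle)).trans (h a1 a2 ha2 hle)

theorem stmt12_general {nx ny : ℕ} {S : Type*} {σ : ℝ → ℝ} (hσcont : Continuous σ)
    (hσnonpoly : ¬ ∃ p : ℝ[X], ∀ t : ℝ, σ t = p.eval t)
    {Kx : Set (Fin nx → ℝ)} (hKx : IsCompact Kx)
    {Ky : Set (Fin ny → ℝ)} (hKycomp : IsCompact Ky) (hKyconv : Convex ℝ Ky)
    (hKyint : (interior Ky).Nonempty)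
    {aLow : ℝ} {f : (Fin nx → ℝ) → ℝ → (Fin ny → ℝ) → ℝ}
    {I : S → (Fin nx → ℝ) → ℝ → (Fin ny → ℝ) → ℝ}
    (hfcont : ContinuousOn (fun q : (Fin nx → ℝ) × ℝ × (Fin ny → ℝ) => f q.1 q.2.1 q.2.2)
      (Kx ×ˢ Ici aLow ×ˢ Ky))
    (hfconv : ∀ x ∈ Kx,
      QuasiconvexOn ℝ (Ici aLow ×ˢ Ky) fun p : ℝ × (Fin ny → ℝ) => f x p.1 p.2)
    (hfmono : ∀ x ∈ Kx, ∀ y ∈ Ky, MonotoneOn (fun a => f x a y) (Ici aLow))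
    (hI : EquicontinuousOn
      (fun s (q : (Fin nx → ℝ) × ℝ × (Fin ny → ℝ)) => I s q.1 q.2.1 q.2.2)
      (Kx ×ˢ Ici aLow ×ˢ Ky))
    (hIconc : ∀ s, ∀ x ∈ Kx,
      QuasiconcaveOn ℝ (Ici aLow ×ˢ Ky) fun p : ℝ × (Fin ny → ℝ) => I s x p.1 p.2)
    {LaI : ℝ} (hLaI : 0 < LaI)
    (hIslope : ∀ s, ∀ x ∈ Kx, ∀ y ∈ Ky, ∀ a1 a2 : ℝ, aLow ≤ a2 → a2 ≤ a1 →
      LaI * (a1 - a2) ≤ I s x a1 y - I s x a2 y)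
    {M : ℝ} (hM : ∀ s, ∀ x ∈ Kx, ∀ y ∈ Ky, M ≤ I s x aLow y) {ε : ℝ} (hε : 0 < ε) :
    ∃ F : (Fin nx → ℝ) → (Fin (ny + 1) → ℝ), IsNN σ nx (ny + 1) F ∧
      ∀ x ∈ Kx, (F x 0, fun i : Fin ny => F x i.succ) ∈ nearOptimalSet Ky aLow f I ε x := by
  have : CompactSpace Kx := isCompact_iff_compactSpace.1 hKx
  have hval : ContinuousOn (fun q : Kx × ℝ × (Fin ny → ℝ) => ((q.1 : Fin nx → ℝ), q.2))
      (univ ×ˢ Ici aLow ×ˢ Ky) := by fun_prop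
  have hmaps : MapsTo (fun q : Kx × ℝ × (Fin ny → ℝ) => ((q.1 : Fin nx → ℝ), q.2))
      (univ ×ˢ Ici aLow ×ˢ Ky) (Kx ×ˢ Ici aLow ×ˢ Ky) := fun q hq => ⟨q.1.2, hq.2⟩
  obtain ⟨g, δ, hδ, hg⟩ := exists_continuousMap_ball_subset_nearOptimalSet (X := Kx)
    (f := fun x => f x) (I := fun s x => I s x) hε hKycomp hKyconv hKyint
    (hfcont.comp hval hmaps) (fun x => hfconv x x.2) (fun x => hfmono x x.2)
    (equicontinuousOn_comp_of_mapsTo hI hval hmaps) (fun s x => hIconc s x x.2) hLaI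
    (fun s x => hIslope s x x.2) (fun s x => hM s x x.2)
  obtain ⟨F, hF, hFg⟩ := exists_isNN_prodMk_dist_lt hσcont hσnonpoly g hδ
  exact ⟨F, hF, fun x hx => hg ⟨x, hx⟩ (hFg ⟨x, hx⟩)⟩

end General

/-- Theorem 3.5: in the full CSIP setting, for every `ε > 0` there is a single
neural network `NN = (NN_a, NN_y)` that for all `x ∈ Kx` outputs a feasible point of `Γ(x)`
that is `ε`-optimal: `f(x, NN_a(x), NN_y(x)) − V(x) ≤ ε`. -/
theorem stmt12 {nx ny : ℕ} {S : Type*}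
    (σ : ℝ → ℝ) (hσcont : Continuous σ)
    (hσnonpoly : ¬ ∃ p : Polynomial ℝ, ∀ t : ℝ, σ t = p.eval t)
    (Kx : Set (Fin nx → ℝ)) (hKx : IsCompact Kx)
    (Ky : Set (Fin ny → ℝ)) (hKycomp : IsCompact Ky) (hKyconv : Convex ℝ Ky)
    (hKyne : Ky.Nonempty)
    (hbox : ∃ r : ℝ, 0 < r ∧ r < 1 ∧ ∃ Lr : ℝ, 1 ≤ Lr ∧
      ∀ δ : ℝ, 0 < δ → δ < r → ∃ C : Set (Fin ny → ℝ),
        IsClosed C ∧ Convex ℝ C ∧ C ⊆ Ky ∧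
        (∀ y' ∈ C, ∀ y : Fin ny → ℝ, ‖y' - y‖ ≤ δ → y ∈ Ky) ∧
        (∀ y ∈ Ky, ∃ y' ∈ C, ‖y - y'‖ ≤ Lr * δ))
    (aLow : ℝ) (f : (Fin nx → ℝ) → ℝ → (Fin ny → ℝ) → ℝ)
    (I : S → (Fin nx → ℝ) → ℝ → (Fin ny → ℝ) → ℝ)
    (Lf : NNReal)
    (hfLip : ∀ x ∈ Kx, LipschitzOnWith Lf
      (fun p : ℝ × (Fin ny → ℝ) => f x p.1 p.2) (Set.Ici aLow ×ˢ Ky))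
    (hfcont : ContinuousOn
      (fun q : (Fin nx → ℝ) × ℝ × (Fin ny → ℝ) => f q.1 q.2.1 q.2.2)
      (Kx ×ˢ Set.Ici aLow ×ˢ Ky))
    (hfconv : ∀ x ∈ Kx,
      ConvexOn ℝ (Set.Ici aLow ×ˢ Ky) (fun p : ℝ × (Fin ny → ℝ) => f x p.1 p.2))
    (Laf : ℝ) (hLaf : 0 < Laf)
    (hfslope : ∀ x ∈ Kx, ∀ y ∈ Ky, ∀ a1 a2 : ℝ, aLow ≤ a2 → a2 ≤ a1 →
      Laf * (a1 - a2) ≤ f x a1 y - f x a2 y)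
    (LI : NNReal)
    (hILip : ∀ s : S, LipschitzOnWith LI
      (fun q : (Fin nx → ℝ) × ℝ × (Fin ny → ℝ) => I s q.1 q.2.1 q.2.2)
      (Kx ×ˢ Set.Ici aLow ×ˢ Ky))
    (hIconc : ∀ s : S, ∀ x ∈ Kx,
      ConcaveOn ℝ (Set.Ici aLow ×ˢ Ky) (fun p : ℝ × (Fin ny → ℝ) => I s x p.1 p.2))
    (LaI : ℝ) (hLaI : 0 < LaI)
    (hIslope : ∀ s : S, ∀ x ∈ Kx, ∀ y ∈ Ky, ∀ a1 a2 : ℝ, aLow ≤ a2 → a2 ≤ a1 →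
      LaI * (a1 - a2) ≤ I s x a1 y - I s x a2 y)
    (M : ℝ)
    (hM : IsGLB {z : ℝ | ∃ s : S, ∃ x ∈ Kx, ∃ y ∈ Ky, z = I s x aLow y} M) :
    ∀ ε : ℝ, 0 < ε →
      ∃ F : (Fin nx → ℝ) → (Fin (ny + 1) → ℝ), IsNN σ nx (ny + 1) F ∧
        ∀ x ∈ Kx,
          (F x 0, fun i : Fin ny => F x i.succ) ∈ GammaFull Ky aLow I x ∧
          f x (F x 0) (fun i : Fin ny => F x i.succ) - VFull Ky aLow f I x ≤ ε := by
  intro ε hε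
  obtain ⟨r, hr, -, _, -, hshrink⟩ := hbox
  obtain ⟨C, -, -, -, hCnhds, hCdense⟩ := hshrink (r / 2) (half_pos hr) (half_lt_self hr)
  obtain ⟨y, hy⟩ := hKyne
  obtain ⟨y', hy', -⟩ := hCdense y hy
  obtain ⟨F, hF, hFopt⟩ := stmt12_general hσcont hσnonpoly hKx hKycomp hKyconv
    (nonempty_interior_of_forall_norm_sub_le (half_pos hr) (hCnhds y' hy')) hfcont
    (fun x hx => (hfconv x hx).quasiconvexOn)
    (fun x hx y hy => monotoneOn_Ici_of_mul_sub_le hLaf.le (hfslope x hx y hy))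
    (LipschitzOnWith.uniformEquicontinuousOn _ LI hILip).equicontinuousOn
    (fun s x hx => (hIconc s x hx).quasiconcaveOn) hLaI hIslope
    (fun s x hx y hy => hM.1 ⟨s, x, hx, y, hy, rfl⟩) hε
  exact ⟨F, hF, fun x hx => ⟨(hFopt x hx).1, sub_le_iff_le_add'.2 (hFopt x hx).2⟩⟩
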